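/- Let L ⊂ S be a graded lattice ideal of dimension 1 generated by the binomials t^{α_1⁺} − t^{α_1⁻}, …, t^{α_m⁺} − t^{α_m⁻}. Then deg S/L = d_1 ⋯ d_{s−1}, where d_1,…,d_{s−1} are the invariant factors of the integral matrix A whose rows are α_1,…,α_m. -/

import Mathlib

open MvPolynomial

/-- The binomial `t^{a⁺} - t^{a⁻}` associated to an integer vector `a ∈ ℤ^s`,
where `a⁺` and `a⁻` are the positive and negative parts of `a`. -/
noncomputable def latticeBinomial (K : Type*) [Field K] {s : ℕ} (a : Fin s → ℤ) :
    MvPolynomial (Fin s) K :=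
  (∏ i, X i ^ (a i).toNat) - ∏ i, X i ^ (-(a i)).toNat

/-- The lattice ideal `I(L) = ({t^{a⁺} - t^{a⁻} : a ∈ L})` of a lattice `L ⊆ ℤ^s`. -/
noncomputable def latticeIdeal (K : Type*) [Field K] {s : ℕ} (L : AddSubgroup (Fin s → ℤ)) :
    Ideal (MvPolynomial (Fin s) K) :=
  Ideal.span {f | ∃ a ∈ L, f = latticeBinomial K a}

/-- The Hilbert function `H_I(d) = dim_K S_d / I_d` of `S/I`, where `S_d` is the space of
homogeneous polynomials of degree `d` (together with `0`) and `I_d = I ∩ S_d`. -/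
noncomputable def hilbertFunction {K : Type*} [Field K] {s : ℕ}
    (I : Ideal (MvPolynomial (Fin s) K)) (d : ℕ) : ℕ :=
  Module.finrank K
    (↥(homogeneousSubmodule (Fin s) K d) ⧸
      (Submodule.comap (homogeneousSubmodule (Fin s) K d).subtype (Submodule.restrictScalars K I)))

/-!
The ideal `I(L)` is the kernel of the map `S → K[ℤ^s / L]` sending a monomial to the class of its
exponent vector. Hence `I(L)` determines `L`, so `L` is the row lattice of `A`, and `H(d)` counts
the classes in `ℤ^s / L` of the exponent vectors in `ℕ^s` of degree `d`. Let `M ⊂ ℤ^s` be the group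
of vectors of coordinate sum `0`; it contains `L` with finite index `k`, since both have rank
`s - 1`. As `k M ⊆ L`, for large `d` every integer vector of degree `d` is congruent modulo `L` to
one in `ℕ^s`. The classes counted by `H(d)` then form a coset of `M / L`, so `H(d) = [M : L]`.

To compute the index, use the coordinates `a V` in which `L` becomes the row lattice of the diagonal
matrix `D = U A V`. The last coordinate vanishes on `L`, so its kernel also contains `L` with finite
index, and two homomorphisms to `ℤ` with that property have the same kernel. Thus `M` is the free
group on the first `s - 1` coordinates, and `[M : L] = ∏ |ℤ / d_k|`.
-/

section AddGroup

variable {G A B : Type*} [AddGroup G] [AddGroup A] [AddGroup B]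

theorem ncard_image_preimage_singleton (f : G →+ A) (g : G →+ B) (a : G) :
    (g '' (f ⁻¹' {f a})).ncard = g.ker.relIndex f.ker := by
  have htranslate : g '' (f ⁻¹' {f a}) = (g a + ·) '' (f.ker.map g : Set B) := by
    ext b
    constructor
    · rintro ⟨x, hx : f x = f a, rfl⟩
      exact ⟨g (-a + x), ⟨-a + x, by simp [hx], rfl⟩, by simp⟩
    · rintro ⟨_, ⟨x, hx, rfl⟩, rfl⟩
      exact ⟨a + x, by simpa using hx, map_add g a x⟩
  rw [htranslate, Set.ncard_image_of_injective _ (add_right_injective (g a)),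
    AddSubgroup.relIndex_ker]
  rfl

theorem relIndex_eq_prod_natAbs_of_mem_iff_dvd {ι : Type*} [Fintype ι] {L H : AddSubgroup G}
    {φ : G →+ (ι → ℤ)} (d : ι → ℤ) (hφ : H.map φ = ⊤)
    (hL : ∀ a ∈ H, a ∈ L ↔ ∀ i, d i ∣ φ a i) :
    L.relIndex H = ∏ i, (d i).natAbs := by
  let D : AddSubgroup (ι → ℤ) := AddSubgroup.pi Set.univ fun i => AddSubgroup.zmultiples (d i)
  have hLD : H ⊓ L = H ⊓ D.comap φ := by
    ext a
    simp only [AddSubgroup.mem_inf, and_congr_right_iff, AddSubgroup.mem_comap, D,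
      AddSubgroup.mem_pi, Set.mem_univ, true_imp_iff, Int.mem_zmultiples_iff]
    exact hL a
  rw [← AddSubgroup.inf_relIndex_left, hLD, AddSubgroup.inf_relIndex_left,
    AddSubgroup.relIndex_comap, hφ, AddSubgroup.relIndex_top_right, AddSubgroup.index_pi]
  simp only [Int.index_zmultiples]

end AddGroup

section FiniteIndex

variable {G B : Type*} [AddCommGroup G] [AddCommGroup B] {L H : AddSubgroup G}

theorem relIndex_nsmul_mem {a : G} (ha : a ∈ H) : L.relIndex H • a ∈ L :=
  (L.addSubgroupOf H).nsmul_index_mem ⟨a, ha⟩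

theorem le_ker_of_relIndex_ne_zero [IsAddTorsionFree B] (h : L.relIndex H ≠ 0) {f : G →+ B}
    (hf : L ≤ f.ker) : H ≤ f.ker := fun a ha => by
  have hLa : L.relIndex H • f a = 0 := by
    rw [← map_nsmul]
    exact hf (relIndex_nsmul_mem ha)
  exact (smul_eq_zero_iff_right h).mp hLa

theorem relIndex_ne_zero_of_finrank_eq [Module.Finite ℤ G] (hLH : L ≤ H)
    (h : Module.finrank ℤ L = Module.finrank ℤ H) : L.relIndex H ≠ 0 := by
  have : Module.Finite ℤ H := inferInstanceAs (Module.Finite ℤ (AddSubgroup.toIntSubmodule H))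
  let N : Submodule ℤ H := AddSubgroup.toIntSubmodule (L.addSubgroupOf H)
  have hN : Module.finrank ℤ N = Module.finrank ℤ H := by
    rw [← h]
    exact (AddSubgroup.addSubgroupOfEquivOfLe hLH).toIntLinearEquiv.finrank_eq
  have hquot : Module.finrank ℤ (H ⧸ N) = 0 := by
    have := N.finrank_quotient_add_finrank
    omega
  have htors : Module.IsTorsion ℤ (H ⧸ N) := Module.finrank_eq_zero_iff_isTorsion.mp hquot
  have := Module.finite_of_fg_torsion (H ⧸ N) htors
  exact AddSubgroup.index_ne_zero_of_finite (hH := this)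

theorem finrank_ker_add_finrank_of_surjective [Module.Finite ℤ G] {f : G →+ B}
    (hf : Function.Surjective f) :
    Module.finrank ℤ f.ker + Module.finrank ℤ B = Module.finrank ℤ G := by
  have e := f.toIntLinearMap.quotKerEquivOfSurjective hf
  rw [← e.finrank_eq, add_comm]
  exact (LinearMap.ker f.toIntLinearMap).finrank_quotient_add_finrank

theorem relIndex_ker_ne_zero_of_finrank_add_one [Module.Finite ℤ G] {f : G →+ ℤ}
    (hf : Function.Surjective f) (hLf : L ≤ f.ker)
    (hL : Module.finrank ℤ L + 1 = Module.finrank ℤ G) : L.relIndex f.ker ≠ 0 := by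
  apply relIndex_ne_zero_of_finrank_eq hLf
  have := finrank_ker_add_finrank_of_surjective hf
  rw [Module.finrank_self] at this
  omega

theorem ker_eq_ker_of_finrank_add_one [Module.Finite ℤ G] {f g : G →+ ℤ}
    (hf : Function.Surjective f) (hg : Function.Surjective g) (hLf : L ≤ f.ker) (hLg : L ≤ g.ker)
    (hL : Module.finrank ℤ L + 1 = Module.finrank ℤ G) : f.ker = g.ker :=
  le_antisymm (le_ker_of_relIndex_ne_zero (relIndex_ker_ne_zero_of_finrank_add_one hf hLf hL) hLg)
    (le_ker_of_relIndex_ne_zero (relIndex_ker_ne_zero_of_finrank_add_one hg hLg hL) hLf)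

end FiniteIndex

section Matrices

open Matrix

theorem vecMul_mem_range_iff {R m n : Type*} [CommRing R] [Fintype m] [Fintype n]
    [DecidableEq m] [DecidableEq n] (A : Matrix m n R) {U : Matrix m m R} {V : Matrix n n R}
    (hU : IsUnit U.det) (hV : IsUnit V.det) (a : n → R) :
    a ᵥ* V ∈ LinearMap.range (U * A * V).vecMulLinear ↔ a ∈ LinearMap.range A.vecMulLinear := by
  simp only [LinearMap.mem_range, vecMulLinear_apply]
  constructor
  · rintro ⟨c, hc⟩
    refine ⟨c ᵥ* U, ?_⟩
    simpa [vecMul_vecMul, mul_nonsing_inv_cancel_right _ _ hV,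
      mul_nonsing_inv _ hV] using congrArg (· ᵥ* V⁻¹) hc
  · rintro ⟨c, rfl⟩
    refine ⟨c ᵥ* U⁻¹, ?_⟩
    simp [vecMul_vecMul, Matrix.mul_assoc U, nonsing_inv_mul_cancel_left _ _ hU]

theorem mem_range_vecMulLinear_iff_dvd {R : Type*} [CommSemiring R] {m n : ℕ} (hnm : n ≤ m)
    {D : Matrix (Fin m) (Fin (n + 1)) R} {d : ℕ → R}
    (hD : ∀ i j, D i j = if (i : ℕ) = j ∧ (j : ℕ) < n then d j else 0) (x : Fin (n + 1) → R) :
    x ∈ LinearMap.range D.vecMulLinear ↔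
      (∀ k : Fin n, d k ∣ x k.castSucc) ∧ x (Fin.last n) = 0 := by
  have hinit (c : Fin m → R) (k : Fin n) : (c ᵥ* D) k.castSucc = c (k.castLE hnm) * d k := by
    rw [vecMul, dotProduct, Finset.sum_eq_single (k.castLE hnm)]
    · simp [hD]
    · intro i _ hi
      have : (i : ℕ) ≠ k := fun h => hi (Fin.ext h)
      simp [hD, this]
    · simp
  have hlast (c : Fin m → R) : (c ᵥ* D) (Fin.last n) = 0 := by
    simp [vecMul, dotProduct, hD]
  simp only [LinearMap.mem_range, vecMulLinear_apply]
  constructor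
  · rintro ⟨c, rfl⟩
    exact ⟨fun k => hinit c k ▸ dvd_mul_left _ _, hlast c⟩
  · rintro ⟨hdvd, hx⟩
    choose b hb using hdvd
    refine ⟨fun i => if h : (i : ℕ) < n then b ⟨i, h⟩ else 0, ?_⟩
    ext j
    refine Fin.lastCases ?_ (fun k => ?_) j
    · rw [hlast, hx]
    · simp [hinit, hb, mul_comm]

end Matrices

section MonoidAlgebra

-- `Function.invFun f` selects one monomial in each fibre of `f`.
theorem sub_mapDomain_invFun_mem {R M N : Type*} [Ring R] [AddMonoid M] (f : M → N)
    (I : AddSubgroup (AddMonoidAlgebra R M))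
    (hI : ∀ u v r, f u = f v →
      AddMonoidAlgebra.single u r - AddMonoidAlgebra.single v r ∈ I) (x : AddMonoidAlgebra R M) :
    x - (x.mapDomain f).mapDomain (Function.invFun f) ∈ I := by
  induction x using AddMonoidAlgebra.induction_linear with
  | zero => simp
  | add x y hx hy =>
    simpa only [AddMonoidAlgebra.mapDomain_add, add_sub_add_comm] using I.add_mem hx hy
  | single u r =>
    simpa only [AddMonoidAlgebra.mapDomain_single] using
      hI _ _ r (Function.invFun_eq ⟨u, rfl⟩).symm

theorem map_mapDomainAlgHom_supported {R M N : Type*} [CommSemiring R] [AddMonoid M] [AddMonoid N]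
    (f : M →+ N) (s : Set M) :
    (AddMonoidAlgebra.supported R R s).map (AddMonoidAlgebra.mapDomainAlgHom R R f).toLinearMap =
      AddMonoidAlgebra.supported R R (f '' s) := by
  simp only [AddMonoidAlgebra.supported_eq_span_single, Submodule.map_span, Set.image_image,
    AlgHom.toLinearMap_apply, AddMonoidAlgebra.mapDomainAlgHom_apply,
    AddMonoidAlgebra.mapDomain_single]

theorem finrank_supported {R M : Type*} [CommRing R] [Nontrivial R] (s : Set M) :
    Module.finrank R (AddMonoidAlgebra.supported R R s) = s.ncard :=
  Module.finrank_eq_nat_card_basis (.ofRepr (AddMonoidAlgebra.supportedEquivFinsupp s))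

end MonoidAlgebra

section LatticeIdeal

variable {K : Type*} [Field K] {s : ℕ}

/-- The class in `ℤ^s / L` of an exponent vector in `ℕ^s`. Two monomials are congruent modulo `I(L)`
exactly when their exponent vectors have the same class. -/
noncomputable def exponentClass (L : AddSubgroup (Fin s → ℤ)) : (Fin s →₀ ℕ) →+ (Fin s → ℤ) ⧸ L :=
  (QuotientAddGroup.mk' L).comp
    (((Nat.castAddMonoidHom ℤ).compLeft (Fin s)).comp Finsupp.coeFnAddHom)

theorem exponentClass_apply (L : AddSubgroup (Fin s → ℤ)) (u : Fin s →₀ ℕ) :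
    exponentClass L u = QuotientAddGroup.mk fun i => (u i : ℤ) := rfl

theorem exponentClass_eq_iff {L : AddSubgroup (Fin s → ℤ)} {u v : Fin s →₀ ℕ} :
    exponentClass L u = exponentClass L v ↔ (fun i => (u i : ℤ) - v i) ∈ L := by
  rw [eq_comm, exponentClass_apply, exponentClass_apply, QuotientAddGroup.eq, neg_add_eq_sub]
  rfl

theorem monomial_mul_latticeBinomial (u v : Fin s →₀ ℕ) (c : K) :
    monomial (u ⊓ v) c * latticeBinomial K (fun i => (u i : ℤ) - v i) =
      monomial u c - monomial v c := by
  simp only [latticeBinomial, mul_sub, monomial_eq, Finsupp.prod_pow, mul_assoc,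
    ← Finset.prod_mul_distrib, ← pow_add, Finsupp.inf_apply]
  congr! 4 with i _ i _ <;> omega

theorem latticeBinomial_eq_monomial_sub_monomial (a : Fin s → ℤ) :
    latticeBinomial K a =
      monomial (Finsupp.equivFunOnFinite.symm fun i => (a i).toNat) 1 -
        monomial (Finsupp.equivFunOnFinite.symm fun i => (-a i).toNat) 1 := by
  simp [latticeBinomial, monomial_eq, Finsupp.prod_pow]

/-- The homomorphism `S → K[ℤ^s / L]` sending a monomial to the class of its exponent vector; it
presents `I(L)` as a kernel. -/
noncomputable def classAlgHom (K : Type*) [Field K] (L : AddSubgroup (Fin s → ℤ)) :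
    MvPolynomial (Fin s) K →ₐ[K] AddMonoidAlgebra K ((Fin s → ℤ) ⧸ L) :=
  AddMonoidAlgebra.mapDomainAlgHom K K (exponentClass L)

theorem classAlgHom_monomial (L : AddSubgroup (Fin s → ℤ)) (u : Fin s →₀ ℕ) (c : K) :
    classAlgHom K L (monomial u c) = AddMonoidAlgebra.single (exponentClass L u) c :=
  AddMonoidAlgebra.mapDomain_single

theorem latticeBinomial_mem_ker_iff {L : AddSubgroup (Fin s → ℤ)} {a : Fin s → ℤ} :
    latticeBinomial K a ∈ RingHom.ker (classAlgHom K L) ↔ a ∈ L := by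
  rw [RingHom.mem_ker, latticeBinomial_eq_monomial_sub_monomial, map_sub, classAlgHom_monomial,
    classAlgHom_monomial, sub_eq_zero, AddMonoidAlgebra.single_left_inj one_ne_zero,
    exponentClass_eq_iff]
  simp

theorem latticeIdeal_eq_ker (L : AddSubgroup (Fin s → ℤ)) :
    latticeIdeal K L = RingHom.ker (classAlgHom K L) := by
  apply le_antisymm
  · rw [latticeIdeal, Ideal.span_le]
    rintro _ ⟨a, ha, rfl⟩
    exact latticeBinomial_mem_ker_iff.mpr ha
  · intro p hp
    have hmonomial (u v : Fin s →₀ ℕ) (c : K) (huv : exponentClass L u = exponentClass L v) :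
        monomial u c - monomial v c ∈ latticeIdeal K L := by
      rw [← monomial_mul_latticeBinomial]
      exact Ideal.mul_mem_left _ _ (Ideal.subset_span ⟨_, exponentClass_eq_iff.mp huv, rfl⟩)
    have hzero : AddMonoidAlgebra.mapDomain (exponentClass L) p = 0 := hp
    simpa [hzero] using sub_mapDomain_invFun_mem (exponentClass L)
      (latticeIdeal K L).toAddSubgroup hmonomial p

theorem eq_closure_range_of_latticeIdeal_eq_span {ι : Type*} {α : ι → Fin s → ℤ}
    {L : AddSubgroup (Fin s → ℤ)}
    (h : latticeIdeal K L = Ideal.span (Set.range fun k => latticeBinomial K (α k))) :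
    L = AddSubgroup.closure (Set.range α) := by
  apply le_antisymm
  · intro a ha
    rw [← latticeBinomial_mem_ker_iff (K := K)]
    have hspan : latticeIdeal K L ≤
        RingHom.ker (classAlgHom K (AddSubgroup.closure (Set.range α))) := by
      rw [h, Ideal.span_le]
      rintro _ ⟨k, rfl⟩
      exact latticeBinomial_mem_ker_iff.mpr (AddSubgroup.subset_closure ⟨k, rfl⟩)
    exact hspan (Ideal.subset_span ⟨a, ha, rfl⟩)
  · rw [AddSubgroup.closure_le]
    rintro _ ⟨k, rfl⟩
    apply (latticeBinomial_mem_ker_iff (K := K)).mp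
    rw [← latticeIdeal_eq_ker, h]
    exact Ideal.subset_span ⟨k, rfl⟩

theorem hilbertFunction_latticeIdeal (L : AddSubgroup (Fin s → ℤ)) (d : ℕ) :
    hilbertFunction (latticeIdeal K L) d = (exponentClass L '' {u | u.degree = d}).ncard := by
  let S : Submodule K (MvPolynomial (Fin s) K) := homogeneousSubmodule (Fin s) K d
  let φ : MvPolynomial (Fin s) K →ₗ[K] _ := (classAlgHom K L).toLinearMap
  calc hilbertFunction (latticeIdeal K L) d
      = Module.finrank K (S ⧸ LinearMap.ker (φ.domRestrict S)) := by
        rw [latticeIdeal_eq_ker]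
        rfl
    _ = Module.finrank K (S.map φ) := by
        rw [(φ.domRestrict S).quotKerEquivRange.finrank_eq, LinearMap.range_domRestrict]
    _ = (exponentClass L '' {u | u.degree = d}).ncard := by
        have hmap : S.map φ = AddMonoidAlgebra.supported K K
            (exponentClass L '' {u | u.degree = d}) := by
          simp only [S, homogeneousSubmodule_eq_finsupp_supported]
          exact map_mapDomainAlgHom_supported _ _
        rw [hmap, finrank_supported]

/-- The total degree of a Laurent monomial, as a function of its exponent vector. -/
def coordSum (ι : Type*) [Fintype ι] : (ι → ℤ) →+ ℤ := ∑ i, Pi.evalAddMonoidHom (fun _ => ℤ) i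

theorem coordSum_apply {ι : Type*} [Fintype ι] (a : ι → ℤ) : coordSum ι a = ∑ i, a i := by
  simp [coordSum]

theorem coordSum_surjective {ι : Type*} [Fintype ι] [Nonempty ι] :
    Function.Surjective (coordSum ι) := fun d => by
  classical
  obtain ⟨i₀⟩ := ‹Nonempty ι›
  exact ⟨Pi.single i₀ d, by simp [coordSum_apply]⟩

theorem exists_nsmul_le_of_card_mul_le {ι : Type*} [Fintype ι] [Nonempty ι] {k : ℕ} (hk : 0 < k)
    {a : ι → ℤ} (ha : (Fintype.card ι * k : ℕ) ≤ coordSum ι a) :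
    ∃ c ∈ (coordSum ι).ker, k • c ≤ a := by
  classical
  obtain ⟨i₀⟩ := ‹Nonempty ι›
  have hkℤ : (0 : ℤ) < k := by exact_mod_cast hk
  let q : ℤ := ∑ i, a i / k
  have hq : 0 ≤ q := by
    have hsum : coordSum ι a ≤ k * q + Fintype.card ι * k := by
      calc coordSum ι a = ∑ i, a i := coordSum_apply a
        _ ≤ ∑ i, (k * (a i / k) + k) := Finset.sum_le_sum fun i _ => by
          linarith [Int.emod_lt_of_pos (a i) hkℤ, Int.emod_add_mul_ediv (a i) k]
        _ = k * q + Fintype.card ι * k := by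
          simp [q, Finset.sum_add_distrib, Finset.mul_sum]
    push_cast at ha
    exact nonneg_of_mul_nonneg_right (by linarith : 0 ≤ k * q) hkℤ
  -- Coordinatewise division by `k`, made homogeneous by lowering one coordinate by the sum `q ≥ 0`.
  refine ⟨(fun i => a i / k) - Pi.single i₀ q, ?_, ?_⟩
  · simp [AddMonoidHom.mem_ker, coordSum_apply, q]
  · calc k • ((fun i => a i / k) - Pi.single i₀ q) ≤ k • fun i => a i / k :=
          nsmul_le_nsmul_right (sub_le_self _ (Pi.single_nonneg.mpr hq)) k
      _ ≤ a := fun i => by simpa using Int.mul_ediv_self_le hkℤ.ne'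

theorem image_exponentClass_degree_eq [NeZero s] {L : AddSubgroup (Fin s → ℤ)}
    (hfin : L.relIndex (coordSum (Fin s)).ker ≠ 0) {d : ℕ}
    (hd : s * L.relIndex (coordSum (Fin s)).ker ≤ d) :
    exponentClass L '' {u | u.degree = d} =
      QuotientAddGroup.mk' L '' (coordSum (Fin s) ⁻¹' {(d : ℤ)}) := by
  have hdegree (u : Fin s →₀ ℕ) : coordSum (Fin s) (fun i => (u i : ℤ)) = u.degree := by
    simp [coordSum_apply, Finsupp.degree_eq_sum]
  ext q
  constructor
  · rintro ⟨u, hu, rfl⟩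
    exact ⟨fun i => (u i : ℤ), by simpa [hdegree] using hu, rfl⟩
  · rintro ⟨a, ha : coordSum (Fin s) a = d, rfl⟩
    obtain ⟨c, hc, hca⟩ := exists_nsmul_le_of_card_mul_le (Nat.pos_of_ne_zero hfin) (a := a) (by
      rw [ha, Fintype.card_fin]
      exact_mod_cast hd)
    obtain ⟨u, hu⟩ : ∃ u : Fin s →₀ ℕ,
        (fun i => (u i : ℤ)) = a - L.relIndex (coordSum (Fin s)).ker • c :=
      ⟨Finsupp.equivFunOnFinite.symm fun i =>
          ((a - L.relIndex (coordSum (Fin s)).ker • c) i).toNat,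
        funext fun i => Int.toNat_of_nonneg (sub_nonneg.mpr hca i)⟩
    refine ⟨u, ?_, ?_⟩
    · have : (u.degree : ℤ) = d := by
        rw [← hdegree, hu, map_sub, map_nsmul, AddMonoidHom.mem_ker.mp hc, ha, smul_zero, sub_zero]
      exact_mod_cast this
    · rw [exponentClass_apply, hu, QuotientAddGroup.mk'_apply, QuotientAddGroup.eq]
      simpa using relIndex_nsmul_mem (L := L) hc

theorem hilbertFunction_latticeIdeal_eq_relIndex [NeZero s] {L : AddSubgroup (Fin s → ℤ)}
    (hfin : L.relIndex (coordSum (Fin s)).ker ≠ 0) {d : ℕ}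
    (hd : s * L.relIndex (coordSum (Fin s)).ker ≤ d) :
    hilbertFunction (latticeIdeal K L) d = L.relIndex (coordSum (Fin s)).ker := by
  obtain ⟨a, ha⟩ := coordSum_surjective (ι := Fin s) d
  rw [hilbertFunction_latticeIdeal, image_exponentClass_degree_eq hfin hd, ← ha,
    ncard_image_preimage_singleton, QuotientAddGroup.ker_mk']

end LatticeIdeal

section Diagonal

open Matrix

variable {m n : ℕ} {V : Matrix (Fin (n + 1)) (Fin (n + 1)) ℤ}

/-- The first `n` of the coordinates `a ᵥ* V` of `a`; for the column transformation `V` of a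
diagonal form these are the coordinates carrying the divisibility conditions. -/
def initVecMul (V : Matrix (Fin (n + 1)) (Fin (n + 1)) ℤ) : (Fin (n + 1) → ℤ) →+ (Fin n → ℤ) :=
  ((LinearMap.funLeft ℤ ℤ Fin.castSucc).comp V.vecMulLinear).toAddMonoidHom

/-- The last of the coordinates `a ᵥ* V` of `a`; for the column transformation `V` of a diagonal
form of rank `n` its kernel is the saturation of the row lattice. -/
def lastVecMul (V : Matrix (Fin (n + 1)) (Fin (n + 1)) ℤ) : (Fin (n + 1) → ℤ) →+ ℤ :=
  ((LinearMap.proj (Fin.last n)).comp V.vecMulLinear).toAddMonoidHom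

theorem lastVecMul_surjective (hV : IsUnit V.det) : Function.Surjective (lastVecMul V) := by
  intro y
  obtain ⟨a, ha⟩ :=
    vecMul_surjective_iff_isUnit.mpr ((isUnit_iff_isUnit_det V).mpr hV) (Pi.single (Fin.last n) y)
  exact ⟨a, by simp [lastVecMul, ha]⟩

theorem map_ker_lastVecMul (hV : IsUnit V.det) : (lastVecMul V).ker.map (initVecMul V) = ⊤ := by
  rw [eq_top_iff]
  intro y _
  obtain ⟨a, ha⟩ :=
    vecMul_surjective_iff_isUnit.mpr ((isUnit_iff_isUnit_det V).mpr hV)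
      (Fin.snoc y 0 : Fin (n + 1) → ℤ)
  refine ⟨a, by simp [lastVecMul, ha], ?_⟩
  ext k
  simp [initVecMul, ha, LinearMap.funLeft_apply]

theorem mem_closure_range_iff_dvd (hnm : n ≤ m) {α : Fin m → Fin (n + 1) → ℤ}
    {U : Matrix (Fin m) (Fin m) ℤ} (hU : IsUnit U.det) (hV : IsUnit V.det) {d : ℕ → ℤ}
    (hD : ∀ i j, (U * Matrix.of α * V) i j = if (i : ℕ) = j ∧ (j : ℕ) < n then d j else 0)
    (a : Fin (n + 1) → ℤ) :
    a ∈ AddSubgroup.closure (Set.range α) ↔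
      (∀ k : Fin n, d k ∣ initVecMul V a k) ∧ a ∈ (lastVecMul V).ker := by
  rw [← Submodule.span_int_eq_addSubgroupClosure, Submodule.mem_toAddSubgroup]
  change a ∈ Submodule.span ℤ (Set.range (Matrix.of α).row) ↔ _
  rw [← range_vecMulLinear, ← vecMul_mem_range_iff _ hU hV,
    mem_range_vecMulLinear_iff_dvd hnm hD]
  rfl

theorem relIndex_ker_coordSum_eq_prod_natAbs {α : Fin m → Fin (n + 1) → ℤ}
    {U : Matrix (Fin m) (Fin m) ℤ} (hU : IsUnit U.det) (hV : IsUnit V.det) {d : ℕ → ℤ}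
    (hD : ∀ i j, (U * Matrix.of α * V) i j = if (i : ℕ) = j ∧ (j : ℕ) < n then d j else 0)
    (hdeg : AddSubgroup.closure (Set.range α) ≤ (coordSum (Fin (n + 1))).ker)
    (hrank : Module.finrank ℤ (AddSubgroup.closure (Set.range α)) = n) :
    (AddSubgroup.closure (Set.range α)).relIndex (coordSum (Fin (n + 1))).ker =
      ∏ k : Fin n, (d k).natAbs := by
  have hnm : n ≤ m := by
    have hspan := finrank_range_le_card (R := ℤ) α
    rw [Set.finrank, Fintype.card_fin] at hspan
    rwa [← hrank, ← Submodule.span_int_eq_addSubgroupClosure]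
  have hmem := mem_closure_range_iff_dvd hnm hU hV hD
  have hker : (coordSum (Fin (n + 1))).ker = (lastVecMul V).ker :=
    ker_eq_ker_of_finrank_add_one coordSum_surjective (lastVecMul_surjective hV) hdeg
      (fun a ha => ((hmem a).mp ha).2) (by simp [hrank])
  rw [hker, relIndex_eq_prod_natAbs_of_mem_iff_dvd (fun k : Fin n => d k) (map_ker_lastVecMul hV)]
  exact fun a ha => by simp only [hmem, ha, and_true]

end Diagonal

theorem degree_of_binomial_generated_lattice_ideal_general
    (K : Type*) [Field K] {s m : ℕ} (hs : 0 < s) (α : Fin m → (Fin s → ℤ))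
    (L : AddSubgroup (Fin s → ℤ)) (hdeg : ∀ a ∈ L, ∑ i, a i = 0)
    (hrank : Module.finrank ℤ L = s - 1)
    (hgen : latticeIdeal K L = Ideal.span (Set.range fun k => latticeBinomial K (α k)))
    (U : Matrix (Fin m) (Fin m) ℤ) (V : Matrix (Fin s) (Fin s) ℤ)
    (hU : IsUnit U.det) (hV : IsUnit V.det) (dvec : ℕ → ℤ)
    (hdiag : ∀ i j, (U * Matrix.of α * V) i j =
      if (i : ℕ) = (j : ℕ) ∧ (j : ℕ) < s - 1 then dvec (j : ℕ) else 0) :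
    ∃ N : ℕ, ∀ d ≥ N, (hilbertFunction (latticeIdeal K L) d : ℤ) =
      ∏ k ∈ Finset.range (s - 1), |dvec k| := by
  obtain ⟨n, rfl⟩ := Nat.exists_eq_add_one.mpr hs
  rw [Nat.add_sub_cancel] at hrank
  have hker : L ≤ (coordSum (Fin (n + 1))).ker := fun a ha => (coordSum_apply a).trans (hdeg a ha)
  have hfin : L.relIndex (coordSum (Fin (n + 1))).ker ≠ 0 :=
    relIndex_ker_ne_zero_of_finrank_add_one coordSum_surjective hker (by simp [hrank])
  refine ⟨(n + 1) * L.relIndex (coordSum (Fin (n + 1))).ker, fun d hd => ?_⟩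
  rw [hilbertFunction_latticeIdeal_eq_relIndex hfin hd]
  obtain rfl := eq_closure_range_of_latticeIdeal_eq_span hgen
  rw [relIndex_ker_coordSum_eq_prod_natAbs hU hV hdiag hker hrank, Finset.prod_range]
  simp

/-- Theorem: let `L ⊆ S` be a graded lattice ideal of dimension 1 (i.e. `L = I(𝓛)` for a
homogeneous lattice `𝓛` of rank `s-1`) generated by the binomials
`t^{α_1⁺} - t^{α_1⁻}, …, t^{α_m⁺} - t^{α_m⁻}`.  Then `deg S/L = d_1 ⋯ d_{s-1}`, where
`d_1, …, d_{s-1}` are the invariant factors (diagonal entries of the Smith normal form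
`D = UAV`) of the matrix `A` whose rows are `α_1, …, α_m`. -/
theorem degree_of_binomial_generated_lattice_ideal
    (K : Type*) [Field K] {s m : ℕ} (hs : 0 < s)
    (α : Fin m → (Fin s → ℤ))
    (J : Ideal (MvPolynomial (Fin s) K))
    (hJgen : J = Ideal.span (Set.range fun k : Fin m => latticeBinomial K (α k)))
    (hJlat : ∃ 𝓛 : AddSubgroup (Fin s → ℤ), (∀ a ∈ 𝓛, ∑ i, a i = 0) ∧
      Module.finrank ℤ 𝓛 = s - 1 ∧ J = latticeIdeal K 𝓛)
    (U : Matrix (Fin m) (Fin m) ℤ) (V : Matrix (Fin s) (Fin s) ℤ)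
    (hU : IsUnit U.det) (hV : IsUnit V.det)
    (dvec : ℕ → ℤ)
    (hpos : ∀ k, k < s - 1 → 0 < dvec k)
    (hdvd : ∀ k, k + 1 < s - 1 → dvec k ∣ dvec (k + 1))
    (hSmith : ∀ i j, (U * Matrix.of α * V) i j =
      if (i : ℕ) = (j : ℕ) ∧ (j : ℕ) < s - 1 then dvec (j : ℕ) else 0) :
    ∃ N : ℕ, ∀ d ≥ N, (hilbertFunction J d : ℤ) =
      ∏ k ∈ Finset.range (s - 1), dvec k := by
  obtain ⟨L, hdeg, hrank, rfl⟩ := hJlat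
  exact (degree_of_binomial_generated_lattice_ideal_general K hs α L hdeg hrank hJgen U V hU hV dvec
    hSmith).imp fun N hN d hd => (hN d hd).trans <|
      Finset.prod_congr rfl fun k hk => abs_of_pos (hpos k (Finset.mem_range.mp hk))
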